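/- Let n ≥ m > r ≥ 0 be integers. For every ε > 0 there exists a constant C = C(m, n, r, ε) such that for all real H ≥ 2 the number of m×n matrices with all entries in F(H) and of rank exactly r is at most C·H^{2mr+nr+n−r²−r+ε} if 2m ≥ n + r, and at most C·H^{2nr+2m−2r+ε} if 2m < n + r. -/

import Mathlib

/-- The set of rationals `a/b` in lowest terms with `|a| ≤ H` and `1 ≤ b ≤ H`. -/
def Farey (H : ℝ) : Set ℚ := {x : ℚ | |(x.num : ℝ)| ≤ H ∧ (x.den : ℝ) ≤ H}

/-!
A matrix of rank `r` is determined by `r` independent rows and `r` independent columns, since these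
meet in a nonsingular block. Express every row of the chosen columns through the chosen rows, and
let `k` be the largest number of nonzero coefficients that occurs. The remaining rows of the chosen
columns then lie in at most `2 ^ r` subspaces of dimension at most `k`, leaving `≪ H ^ (2 * k)`
choices for each of them. Each remaining column is given by `r` entries in `F(H)` such that a fixed
combination of them with `k` nonzero coefficients is again in `F(H)`, leaving
`≪ H ^ (2 * r + 1 - k + ε)` choices.

The last bound concerns solutions in Farey fractions of a linear equation with `k + 1` nonzero
coefficients. Writing their number as the integral of a product of dilated exponential sums, the
inequality between arithmetic and geometric means reduces it to the equation with all coefficients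
equal to `1`. There, for fixed denominators `b i`, the numerators are relations in `ℚ / ℤ` between
the fractions `1 / b i`, which generate a subgroup of order at least `lcm b`; hence a proportion
`≪ 1 / lcm b` of all numerators is admissible, and the sum of `1 / lcm b` over all `b` is `≪ H ^ ε`
by moments of the divisor function.
-/

open Finset

section LinearSolutions

variable {ι R S : Type*} [Fintype ι] [DecidableEq ι]

/-- The solutions `x`, with all coordinates in the finite set `F`, of the homogeneous linear
equation `∑ i, c i * x i = 0`. -/
def linearSolutions [NonUnitalNonAssocSemiring R] [DecidableEq R] (F : Finset R) (c : ι → R) :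
    Finset (ι → R) :=
  {x ∈ Fintype.piFinset fun _ ↦ F | ∑ i, c i * x i = 0}

lemma mem_linearSolutions [NonUnitalNonAssocSemiring R] [DecidableEq R] {F : Finset R}
    {c x : ι → R} : x ∈ linearSolutions F c ↔ (∀ i, x i ∈ F) ∧ ∑ i, c i * x i = 0 := by
  simp only [linearSolutions, mem_filter, Fintype.mem_piFinset]

lemma card_linearSolutions_image [NonUnitalNonAssocSemiring R] [DecidableEq R]
    [NonUnitalNonAssocSemiring S] [DecidableEq S] {φ : R → S} (hφ : φ.Injective) {F : Finset R}
    {c : ι → R} {d : ι → S}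
    (h : ∀ y : ι → R, ∑ i, d i * φ (y i) = 0 ↔ ∑ i, c i * y i = 0) :
    #(linearSolutions (F.image φ) d) = #(linearSolutions F c) := by
  rw [linearSolutions, Fintype.piFinset_image, filter_image,
    card_image_of_injective _ fun _ _ hxy ↦ funext fun i ↦ hφ (congrFun hxy i)]
  simp only [h, linearSolutions]

lemma card_linearSolutions_le_mul_card_support [NonUnitalNonAssocSemiring R] [DecidableEq R]
    (F : Finset R) (c : ι → R) :
    #(linearSolutions F c) ≤ #F ^ (Fintype.card ι - hammingNorm c) *
      #(linearSolutions F fun i : {i // c i ≠ 0} ↦ c i) := by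
  have hcard : #F ^ (Fintype.card ι - hammingNorm c) =
      #(Fintype.piFinset fun _ : {i // ¬ c i ≠ 0} ↦ F) := by
    rw [Fintype.card_piFinset, prod_const, card_univ, Fintype.card_subtype_compl,
      Fintype.card_subtype, hammingNorm]
  let split := Equiv.piEquivPiSubtypeProd (fun i ↦ c i ≠ 0) fun _ ↦ R
  rw [hcard, mul_comm, ← card_product]
  refine card_le_card_of_injOn split (fun x hx ↦ ?_) split.injective.injOn
  obtain ⟨hxF, hx0⟩ := mem_linearSolutions.1 hx
  have hzero : ∑ i : {i // ¬ c i ≠ 0}, c i * x i = 0 :=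
    sum_eq_zero fun i _ ↦ by rw [not_not.1 i.2, zero_mul]
  rw [← Fintype.sum_subtype_add_sum_subtype (fun i ↦ c i ≠ 0), hzero, add_zero] at hx0
  exact mem_product.2 ⟨mem_linearSolutions.2 ⟨fun i ↦ hxF i, hx0⟩,
    Fintype.mem_piFinset.2 fun i ↦ hxF i⟩

end LinearSolutions

section ExponentialSums

open MeasureTheory AddCircle

/-- The exponential sum `t ↦ ∑ x ∈ F, exp (2πi x t)` of a finite set of integers. -/
noncomputable def expSum (F : Finset ℤ) (t : UnitAddCircle) : ℂ := ∑ x ∈ F, fourier x t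

/-- The `k`-th absolute moment of the exponential sum of `F`, over the unit circle. -/
noncomputable def expSumMoment (F : Finset ℤ) (k : ℕ) : ℝ :=
  ∫ t : UnitAddCircle, ‖expSum F t‖ ^ k ∂haarAddCircle

@[fun_prop]
lemma continuous_expSum (F : Finset ℤ) : Continuous (expSum F) := by
  unfold expSum
  fun_prop

lemma integrable_haarAddCircle {E : Type*} [NormedAddCommGroup E] {f : UnitAddCircle → E}
    (hf : Continuous f) : Integrable f haarAddCircle :=
  hf.integrable_of_hasCompactSupport (HasCompactSupport.of_compactSpace f)

lemma integral_fourier (n : ℤ) :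
    ∫ t : UnitAddCircle, fourier n t ∂haarAddCircle = if n = 0 then 1 else 0 := by
  split_ifs with hn
  · simp [hn]
  · exact integral_eq_zero_of_add_right_eq_neg (fourier_add_half_inv_index hn one_pos)

lemma fourier_sum {ι : Type*} (s : Finset ι) (n : ι → ℤ) (t : UnitAddCircle) :
    fourier (∑ i ∈ s, n i) t = ∏ i ∈ s, fourier (n i) t := by
  classical
  induction s using Finset.induction_on with
  | empty => simp only [sum_empty, prod_empty, fourier_zero]
  | insert i s hi ih => rw [sum_insert hi, prod_insert hi, fourier_add, ih]

lemma prod_le_sum_pow_card_div_card {ι : Type*} [Fintype ι] [Nonempty ι]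
    (z : ι → ℝ) (hz : ∀ i, 0 ≤ z i) :
    ∏ i, z i ≤ (∑ i, z i ^ Fintype.card ι) / Fintype.card ι := by
  have hι : (Fintype.card ι : ℝ) ≠ 0 := Nat.cast_ne_zero.2 Fintype.card_ne_zero
  have h := Real.geom_mean_le_arith_mean_weighted univ (fun _ : ι ↦ (Fintype.card ι : ℝ)⁻¹)
    (fun i ↦ z i ^ Fintype.card ι) (fun _ _ ↦ by positivity) (by simp [hι])
    (fun i _ ↦ pow_nonneg (hz i) _)
  simp only [Real.pow_rpow_inv_natCast (hz _) Fintype.card_ne_zero] at h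
  rwa [← mul_sum, inv_mul_eq_div] at h

variable {ι : Type*} [Fintype ι] [DecidableEq ι]

lemma integral_prod_expSum_zsmul (F : Finset ℤ) (c : ι → ℤ) :
    ∫ t : UnitAddCircle, ∏ i, expSum F (c i • t) ∂haarAddCircle = #(linearSolutions F c) := by
  have hexpand (t : UnitAddCircle) : ∏ i, expSum F (c i • t) =
      ∑ x ∈ Fintype.piFinset fun _ ↦ F, fourier (∑ i, c i * x i) t := by
    simp only [expSum, prod_univ_sum, fourier_sum]
    refine sum_congr rfl fun x _ ↦ prod_congr rfl fun i _ ↦ ?_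
    rw [fourier_apply, fourier_apply, smul_smul, mul_comm]
  simp only [hexpand]
  rw [integral_finsetSum _ fun x _ ↦ integrable_haarAddCircle (map_continuous _)]
  simp only [integral_fourier, linearSolutions, sum_boole]

lemma integral_norm_expSum_zsmul_pow (F : Finset ℤ) {c : ℤ} (hc : c ≠ 0) (k : ℕ) :
    ∫ t : UnitAddCircle, ‖expSum F (c • t)‖ ^ k ∂haarAddCircle = expSumMoment F k := by
  have hpres := Measure.measurePreserving_zsmul (haarAddCircle (T := 1)) hc
  have hmeas : AEStronglyMeasurable (fun t ↦ ‖expSum F t‖ ^ k)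
      (haarAddCircle.map fun t : UnitAddCircle ↦ c • t) :=
    Continuous.aestronglyMeasurable (by fun_prop)
  rw [← integral_map hpres.measurable.aemeasurable hmeas, hpres.map_eq, expSumMoment]

lemma card_linearSolutions_le_expSumMoment (F : Finset ℤ) {c : ι → ℤ} (hc : ∀ i, c i ≠ 0) :
    (#(linearSolutions F c) : ℝ) ≤ expSumMoment F (Fintype.card ι) := by
  have hnorm : (#(linearSolutions F c) : ℝ) ≤
      ∫ t : UnitAddCircle, ∏ i, ‖expSum F (c i • t)‖ ∂haarAddCircle := by
    simp only [← norm_prod]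
    rw [← Complex.norm_natCast, ← integral_prod_expSum_zsmul]
    exact norm_integral_le_integral_norm _
  refine hnorm.trans ?_
  rcases isEmpty_or_nonempty ι
  · simp [expSumMoment]
  calc ∫ t : UnitAddCircle, ∏ i, ‖expSum F (c i • t)‖ ∂haarAddCircle
      ≤ ∫ t : UnitAddCircle, (∑ i, ‖expSum F (c i • t)‖ ^ Fintype.card ι) / Fintype.card ι
          ∂haarAddCircle := by
        refine integral_mono (integrable_haarAddCircle (by fun_prop))
          (integrable_haarAddCircle (by fun_prop)) fun t ↦ ?_
        exact prod_le_sum_pow_card_div_card _ fun i ↦ norm_nonneg _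
    _ = (∑ _i : ι, expSumMoment F (Fintype.card ι)) / Fintype.card ι := by
        rw [integral_div, integral_finsetSum _ fun i _ ↦ integrable_haarAddCircle (by fun_prop)]
        simp only [integral_norm_expSum_zsmul_pow F (hc _)]
    _ = expSumMoment F (Fintype.card ι) := by
        rw [sum_const, card_univ, nsmul_eq_mul, mul_div_cancel_left₀]
        exact Nat.cast_ne_zero.2 Fintype.card_ne_zero

lemma conj_expSum {F : Finset ℤ} (hF : ∀ x ∈ F, -x ∈ F) (t : UnitAddCircle) :
    starRingEnd ℂ (expSum F t) = expSum F t := by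
  simp only [expSum, map_sum, ← fourier_neg]
  exact sum_nbij' (- ·) (- ·) hF hF (by simp) (by simp) (by simp)

lemma expSumMoment_two_mul {F : Finset ℤ} (hF : ∀ x ∈ F, -x ∈ F) (l : ℕ) :
    expSumMoment F (2 * l) = #(linearSolutions F (1 : Fin (2 * l) → ℤ)) := by
  have hreal (t : UnitAddCircle) : ((‖expSum F t‖ ^ (2 * l) : ℝ) : ℂ) = expSum F t ^ (2 * l) := by
    rw [pow_mul, pow_mul, sq (expSum F t), Complex.ofReal_pow, Complex.ofReal_pow,
      ← Complex.mul_conj', conj_expSum hF]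
  have h := integral_prod_expSum_zsmul F (1 : Fin (2 * l) → ℤ)
  simp only [Pi.one_apply, one_smul, prod_const, card_univ, Fintype.card_fin, ← hreal] at h
  exact Complex.ofReal_injective (integral_ofReal.symm.trans (h.trans (by push_cast; rfl)))

lemma expSumMoment_succ_le (F : Finset ℤ) (j : ℕ) {T : ℝ} (hT : 0 < T) :
    expSumMoment F (j + 1) ≤ T⁻¹ * expSumMoment F (j + 2) + T * expSumMoment F j := by
  simp only [expSumMoment]
  rw [← integral_const_mul, ← integral_const_mul, ← integral_add
    (integrable_haarAddCircle (by fun_prop)) (integrable_haarAddCircle (by fun_prop))]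
  refine integral_mono (integrable_haarAddCircle (by fun_prop))
    (integrable_haarAddCircle (by fun_prop)) fun t ↦ ?_
  set u := ‖expSum F t‖
  have hsq : T⁻¹ * u ^ (j + 2) + T * u ^ j - u ^ (j + 1) =
      T⁻¹ * u ^ j * ((u - T) ^ 2 + u * T) := by
    field_simp
    ring
  have hnonneg : 0 ≤ T⁻¹ * u ^ j * ((u - T) ^ 2 + u * T) := by positivity
  linarith

end ExponentialSums

section RationalLinearSolutions

lemma exists_eq_mul_intCast {ι : Type*} [Finite ι] (x : ι → ℚ) :
    ∃ q : ℚ, q ≠ 0 ∧ ∃ z : ι → ℤ, ∀ i, x i = q * z i := by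
  obtain ⟨b, hb⟩ := IsLocalization.exist_integer_multiples_of_finite (nonZeroDivisors ℤ) x
  choose z hz using hb
  have hb0 : ((b : ℤ) : ℚ) ≠ 0 := Int.cast_ne_zero.2 (nonZeroDivisors.ne_zero b.2)
  refine ⟨((b : ℤ) : ℚ)⁻¹, inv_ne_zero hb0, z, fun i ↦ ?_⟩
  have hzi : (z i : ℚ) = (b : ℤ) * x i := by
    simpa only [zsmul_eq_mul, eq_intCast] using hz i
  rw [hzi, inv_mul_cancel_left₀ hb0]

lemma exists_eq_image_mul_intCast (F : Finset ℚ) :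
    ∃ q : ℚ, q ≠ 0 ∧ ∃ G : Finset ℤ, F = G.image fun z : ℤ ↦ q * z := by
  obtain ⟨q, hq, z, hz⟩ := exists_eq_mul_intCast fun x : F ↦ (x : ℚ)
  refine ⟨q, hq, univ.image z, ?_⟩
  rw [image_image]
  exact F.attach_image_val.symm.trans (image_congr fun x _ ↦ hz x)

variable {ι : Type*} [Fintype ι] [DecidableEq ι]

lemma card_linearSolutions_image_mul_intCast (G : Finset ℤ) (c : ι → ℤ) {p q : ℚ} (hp : p ≠ 0)
    (hq : q ≠ 0) :
    #(linearSolutions (G.image fun z : ℤ ↦ q * z) fun i ↦ p * c i) = #(linearSolutions G c) := by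
  refine card_linearSolutions_image (fun _ _ h ↦ Int.cast_injective (mul_left_cancel₀ hq h))
    fun y ↦ ?_
  have hscale : ∑ i, p * c i * (q * y i) = p * q * ((∑ i, c i * y i : ℤ) : ℚ) := by
    push_cast
    rw [mul_sum]
    exact sum_congr rfl fun i _ ↦ by ring
  rw [hscale, mul_eq_zero_iff_left (mul_ne_zero hp hq), Int.cast_eq_zero]

/-- The additive energy of order `l` of a symmetric set `F`, as the number of `2 * l`-tuples from
`F` with sum zero. -/
def additiveEnergy {R : Type*} [NonAssocSemiring R] [DecidableEq R] (F : Finset R) (l : ℕ) : ℕ :=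
  #(linearSolutions F (1 : Fin (2 * l) → R))

lemma additiveEnergy_image_mul_intCast (G : Finset ℤ) {q : ℚ} (hq : q ≠ 0) (l : ℕ) :
    additiveEnergy (G.image fun z : ℤ ↦ q * z) l = additiveEnergy G l := by
  rw [additiveEnergy, additiveEnergy, ← card_linearSolutions_image_mul_intCast G 1 one_ne_zero hq]
  congr 2
  ext i
  simp

lemma exists_int_linearSolutions {F : Finset ℚ} (hF : ∀ x ∈ F, -x ∈ F) {c : ι → ℚ}
    (hc : ∀ i, c i ≠ 0) :
    ∃ G : Finset ℤ, (∀ l, expSumMoment G (2 * l) = additiveEnergy F l) ∧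
      #(linearSolutions F c) ≤ expSumMoment G (Fintype.card ι) := by
  obtain ⟨q, hq, G, rfl⟩ := exists_eq_image_mul_intCast F
  obtain ⟨p, hp, d, hd⟩ := exists_eq_mul_intCast c
  have hG : ∀ z ∈ G, -z ∈ G := fun z hz ↦ by
    obtain ⟨w, hw, hwz⟩ := mem_image.1 (hF _ (mem_image_of_mem _ hz))
    rw [← mul_neg, ← Int.cast_neg] at hwz
    rwa [← Int.cast_injective (mul_left_cancel₀ hq hwz)]
  have hd0 (i) : d i ≠ 0 := fun h ↦ hc i (by rw [hd, h, Int.cast_zero, mul_zero])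
  refine ⟨G, fun l ↦ ?_, ?_⟩
  · rw [expSumMoment_two_mul hG, additiveEnergy_image_mul_intCast G hq, additiveEnergy]
  · rw [funext hd, card_linearSolutions_image_mul_intCast G d hp hq]
    exact card_linearSolutions_le_expSumMoment G hd0

lemma card_linearSolutions_le_additiveEnergy {F : Finset ℚ} (hF : ∀ x ∈ F, -x ∈ F) {c : ι → ℚ}
    (hc : ∀ i, c i ≠ 0) {l : ℕ} (hl : Fintype.card ι = 2 * l) :
    #(linearSolutions F c) ≤ additiveEnergy F l := by
  obtain ⟨G, hG, hle⟩ := exists_int_linearSolutions hF hc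
  rw [hl, hG] at hle
  exact_mod_cast hle

lemma card_linearSolutions_le_add_additiveEnergy {F : Finset ℚ} (hF : ∀ x ∈ F, -x ∈ F) {c : ι → ℚ}
    (hc : ∀ i, c i ≠ 0) {l : ℕ} (hl : Fintype.card ι = 2 * l + 1) {T : ℝ}
    (hT : 0 < T) :
    #(linearSolutions F c) ≤ T⁻¹ * additiveEnergy F (l + 1) + T * additiveEnergy F l := by
  obtain ⟨G, hG, hle⟩ := exists_int_linearSolutions hF hc
  rw [← hG, ← hG]
  rw [hl] at hle
  exact hle.trans (expSumMoment_succ_le G (2 * l) hT)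

end RationalLinearSolutions

section DivisorMoments

lemma card_divisors_pow_succ_div_le (j n : ℕ) :
    (#n.divisors : ℝ) ^ (j + 1) / n ≤ ∑ q ∈ n.divisorsAntidiagonal,
      ((#q.1.divisors : ℝ) ^ j / q.1) * ((#q.2.divisors : ℝ) ^ j / q.2) := by
  have hsum : (#n.divisors : ℝ) ^ (j + 1) / n =
      ∑ _q ∈ n.divisorsAntidiagonal, (#n.divisors : ℝ) ^ j / n := by
    rw [sum_const, nsmul_eq_mul, ← Nat.map_div_right_divisors, card_map, pow_succ', mul_div_assoc]
  rw [hsum]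
  refine sum_le_sum fun q hq ↦ ?_
  obtain ⟨rfl, -⟩ := Nat.mem_divisorsAntidiagonal.1 hq
  rw [div_mul_div_comm, ← mul_pow, Nat.cast_mul, Nat.divisors_mul]
  gcongr
  exact_mod_cast card_mul_le

lemma sum_card_divisors_pow_div_le (X j : ℕ) :
    ∑ n ∈ Ioc 0 X, (#n.divisors : ℝ) ^ j / n ≤ (1 + Real.log X) ^ 2 ^ j := by
  induction j with
  | zero =>
    have h := harmonic_le_one_add_log X
    rw [harmonic_eq_sum_Icc] at h
    simpa [← Icc_add_one_left_eq_Ioc] using h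
  | succ j ih =>
    calc ∑ n ∈ Ioc 0 X, (#n.divisors : ℝ) ^ (j + 1) / n
        ≤ ∑ n ∈ Ioc 0 X, ∑ q ∈ Ioc 0 X ×ˢ Ioc 0 X with q.1 * q.2 = n,
            ((#q.1.divisors : ℝ) ^ j / q.1) * ((#q.2.divisors : ℝ) ^ j / q.2) := by
          refine sum_le_sum fun n hn ↦ ?_
          obtain ⟨hn0, hnX⟩ := mem_Ioc.1 hn
          rw [← Nat.divisorsAntidiagonal_eq_prod_filter_of_le hn0.ne' hnX]
          exact card_divisors_pow_succ_div_le j n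
      _ ≤ ∑ q ∈ Ioc 0 X ×ˢ Ioc 0 X,
            ((#q.1.divisors : ℝ) ^ j / q.1) * ((#q.2.divisors : ℝ) ^ j / q.2) :=
          sum_fiberwise_le_sum_of_sum_fiber_nonneg fun _ _ ↦ sum_nonneg fun _ _ ↦ by positivity
      _ = (∑ n ∈ Ioc 0 X, (#n.divisors : ℝ) ^ j / n) ^ 2 := by rw [sq, sum_mul_sum, sum_product]
      _ ≤ ((1 + Real.log X) ^ 2 ^ j) ^ 2 := by gcongr
      _ = (1 + Real.log X) ^ 2 ^ (j + 1) := by rw [← pow_mul, pow_succ]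

lemma card_filter_lcm_eq_le {ι : Type*} [Fintype ι] (B : Finset (ι → ℕ)) {L : ℕ}
    (hL : L ≠ 0) : #{b ∈ B | univ.lcm b = L} ≤ #L.divisors ^ Fintype.card ι := by
  classical
  rw [← card_univ, ← prod_const, ← Fintype.card_piFinset]
  refine card_le_card fun b hb ↦ Fintype.mem_piFinset.2 fun i ↦ Nat.mem_divisors.2 ⟨?_, hL⟩
  rw [← (mem_filter.1 hb).2]
  exact dvd_lcm (mem_univ i)

lemma sum_one_div_lcm_le (ι : Type*) [Fintype ι] [DecidableEq ι] (N : ℕ) :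
    ∑ b ∈ Fintype.piFinset fun _ : ι ↦ Ioc 0 N, (1 / (univ.lcm b : ℕ) : ℝ) ≤
      (1 + Real.log (N ^ Fintype.card ι)) ^ 2 ^ Fintype.card ι := by
  set B := Fintype.piFinset fun _ : ι ↦ Ioc 0 N
  have hlcm (b) (hb : b ∈ B) : univ.lcm b ∈ Ioc 0 (N ^ Fintype.card ι) := by
    have hbN (i) : 0 < b i ∧ b i ≤ N := mem_Ioc.1 (Fintype.mem_piFinset.1 hb i)
    have hprod : ∏ i, b i ≤ N ^ Fintype.card ι := prod_le_pow_card _ _ _ fun i _ ↦ (hbN i).2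
    refine mem_Ioc.2 ⟨Nat.pos_of_ne_zero ?_, le_trans ?_ hprod⟩
    · simpa [Finset.lcm_eq_zero_iff] using fun i ↦ (hbN i).1.ne'
    · exact Nat.le_of_dvd (prod_pos fun i _ ↦ (hbN i).1)
        (Finset.lcm_dvd fun i hi ↦ dvd_prod_of_mem b hi)
  calc ∑ b ∈ B, (1 / (univ.lcm b : ℕ) : ℝ)
      = ∑ L ∈ Ioc 0 (N ^ Fintype.card ι), (#{b ∈ B | univ.lcm b = L} : ℝ) / L := by
        rw [← sum_fiberwise_of_maps_to hlcm]
        refine sum_congr rfl fun L _ ↦ ?_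
        rw [sum_congr rfl fun b hb ↦ by rw [(mem_filter.1 hb).2], sum_const, nsmul_eq_mul,
          mul_one_div]
    _ ≤ ∑ L ∈ Ioc 0 (N ^ Fintype.card ι), (#L.divisors : ℝ) ^ Fintype.card ι / L := by
        refine sum_le_sum fun L hL ↦ ?_
        gcongr
        exact_mod_cast card_filter_lcm_eq_le B (mem_Ioc.1 hL).1.ne'
    _ ≤ (1 + Real.log (N ^ Fintype.card ι)) ^ 2 ^ Fintype.card ι := by
        exact_mod_cast sum_card_divisors_pow_div_le (N ^ Fintype.card ι) (Fintype.card ι)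

end DivisorMoments

section Relations

variable {ι G : Type*} [Fintype ι] [AddCommGroup G]

lemma exists_mem_Ico_sum_zsmul_eq {g : ι → G} (hg : ∀ i, 0 < addOrderOf (g i)) (a : ι → ℤ) :
    ∃ w : ι → ℤ, (∀ i, w i ∈ Ico 0 (addOrderOf (g i) : ℤ)) ∧ ∑ i, w i • g i = ∑ i, a i • g i := by
  refine ⟨fun i ↦ a i % addOrderOf (g i), fun i ↦ ?_, ?_⟩
  · have hpos : (0 : ℤ) < addOrderOf (g i) := Nat.cast_pos.2 (hg i)
    exact mem_Ico.2 ⟨Int.emod_nonneg _ hpos.ne', Int.emod_lt_of_pos _ hpos⟩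
  · exact sum_congr rfl fun i _ ↦ mod_addOrderOf_zsmul (g i) (a i)

variable [DecidableEq ι] [DecidableEq G]

lemma lcm_addOrderOf_le_card_image {g : ι → G} (hg : ∀ i, 0 < addOrderOf (g i)) :
    univ.lcm (fun i ↦ addOrderOf (g i)) ≤
      #((Fintype.piFinset fun i ↦ Ico 0 (addOrderOf (g i) : ℤ)).image fun w ↦ ∑ i, w i • g i) := by
  set W := (Fintype.piFinset fun i ↦ Ico 0 (addOrderOf (g i) : ℤ)).image fun w ↦ ∑ i, w i • g i
  let φ : (ι → ℤ) →+ G := (Fintype.linearCombination ℤ g).toAddMonoidHom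
  have hφW : (φ.range : Set G) = W := by
    ext u
    constructor
    · rintro ⟨a, rfl⟩
      obtain ⟨w, hw, hwa⟩ := exists_mem_Ico_sum_zsmul_eq hg a
      exact mem_coe.2 (mem_image.2 ⟨w, Fintype.mem_piFinset.2 hw, hwa⟩)
    · intro hu
      obtain ⟨w, -, rfl⟩ := mem_image.1 (mem_coe.1 hu)
      exact ⟨w, rfl⟩
  have hcard : Nat.card φ.range = #W := by
    rw [← SetLike.coe_sort_coe, hφW, Nat.card_eq_card_toFinset, toFinset_coe]
  have hpos : 0 < #W := card_pos.2 ⟨0, by rw [← mem_coe, ← hφW]; exact φ.range.zero_mem⟩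
  refine Nat.le_of_dvd hpos (Finset.lcm_dvd fun i _ ↦ ?_)
  have hgi : g i ∈ φ.range := ⟨Pi.single i 1, by simp [φ, Fintype.linearCombination_apply_single]⟩
  rw [← hcard, ← AddSubgroup.addOrderOf_mk (g i) hgi]
  exact addOrderOf_dvd_natCard _

lemma card_relations_mul_lcm_addOrderOf_le {g : ι → G} (hg : ∀ i, 0 < addOrderOf (g i)) {N : ℕ}
    (hN : ∀ i, addOrderOf (g i) ≤ N) :
    #{a ∈ Fintype.piFinset fun _ : ι ↦ Icc (-N : ℤ) N | ∑ i, a i • g i = 0} *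
      univ.lcm (fun i ↦ addOrderOf (g i)) ≤ (3 * N) ^ Fintype.card ι := by
  set Z := {a ∈ Fintype.piFinset fun _ : ι ↦ Icc (-N : ℤ) N | ∑ i, a i • g i = 0}
  set B := Fintype.piFinset fun _ : ι ↦ Ico (-N : ℤ) (2 * N)
  have hB : #B = (3 * N) ^ Fintype.card ι := by
    rw [Fintype.card_piFinset, prod_const, card_univ, Int.card_Ico]
    congr 1
    omega
  set W := (Fintype.piFinset fun i ↦ Ico 0 (addOrderOf (g i) : ℤ)).image fun w ↦ ∑ i, w i • g i
  have hfibre (u) (hu : u ∈ W) : #Z ≤ #{x ∈ B | ∑ i, x i • g i = u} := by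
    obtain ⟨w, hw, rfl⟩ := mem_image.1 hu
    refine card_le_card_of_injOn (· + w) (fun a ha ↦ ?_) (add_left_injective w).injOn
    obtain ⟨haN, ha0⟩ := mem_filter.1 ha
    refine mem_filter.2 ⟨Fintype.mem_piFinset.2 fun i ↦ mem_Ico.2 ?_, ?_⟩
    · have hai := mem_Icc.1 (Fintype.mem_piFinset.1 haN i)
      have hwi := mem_Ico.1 (Fintype.mem_piFinset.1 hw i)
      have hNi := hN i
      simp only [Pi.add_apply]
      omega
    · simp only [Pi.add_apply, add_smul, sum_add_distrib, ha0, zero_add]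
  calc #Z * univ.lcm (fun i ↦ addOrderOf (g i)) ≤ #Z * #W :=
        Nat.mul_le_mul_left _ (lcm_addOrderOf_le_card_image hg)
    _ = ∑ _u ∈ W, #Z := by rw [sum_const, smul_eq_mul, mul_comm]
    _ ≤ ∑ u ∈ W, #{x ∈ B | ∑ i, x i • g i = u} := sum_le_sum hfibre
    _ ≤ #B := by
        rw [sum_card_fiberwise_eq_card_filter]
        exact card_filter_le _ _
    _ = (3 * N) ^ Fintype.card ι := hB

lemma card_sum_div_eq_zero_mul_lcm_le {b : ι → ℕ} {N : ℕ} (hb : ∀ i, b i ∈ Ioc 0 N) :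
    #{a ∈ Fintype.piFinset fun _ : ι ↦ Icc (-N : ℤ) N | ∑ i, ((a i : ℤ) : ℚ) / b i = 0} *
      univ.lcm b ≤ (3 * N) ^ Fintype.card ι := by
  classical
  let g (i : ι) : AddCircle (1 : ℚ) := ((1 / b i : ℚ) : AddCircle (1 : ℚ))
  have hg (i) : addOrderOf (g i) = b i := AddCircle.addOrderOf_period_div (mem_Ioc.1 (hb i)).1
  have hzero (a : ι → ℤ) (ha : ∑ i, (a i : ℚ) / b i = 0) : ∑ i, a i • g i = 0 := by
    rw [← AddCircle.coe_zero, ← ha, ← QuotientAddGroup.mk'_apply, map_sum]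
    refine sum_congr rfl fun i _ ↦ ?_
    rw [div_eq_mul_one_div, ← zsmul_eq_mul]
    rfl
  calc _ ≤ #{a ∈ Fintype.piFinset fun _ : ι ↦ Icc (-N : ℤ) N | ∑ i, a i • g i = 0} *
        univ.lcm b :=
      Nat.mul_le_mul_right _ (card_le_card (monotone_filter_right _ fun a _ ↦ hzero a))
    _ ≤ (3 * N) ^ Fintype.card ι := by
      simp only [← hg] at hb
      rw [← funext hg]
      exact card_relations_mul_lcm_addOrderOf_le (fun i ↦ (mem_Ioc.1 (hb i)).1)
        fun i ↦ (mem_Ioc.1 (hb i)).2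

end Relations

section Farey

lemma zero_mem_farey {H : ℝ} (hH : 1 ≤ H) : 0 ∈ Farey H := by
  simpa [Farey, hH] using zero_le_one.trans hH

lemma neg_mem_farey {H : ℝ} {x : ℚ} (hx : x ∈ Farey H) : -x ∈ Farey H := by
  simpa [Farey] using hx

lemma num_mem_Icc_of_mem_farey {H : ℝ} {x : ℚ} (hx : x ∈ Farey H) :
    x.num ∈ Icc (-⌊H⌋₊ : ℤ) ⌊H⌋₊ := by
  have hnum : (x.num.natAbs : ℝ) ≤ H := by simpa only [Nat.cast_natAbs, Int.cast_abs] using hx.1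
  have := Nat.le_floor hnum
  rw [mem_Icc]
  omega

lemma den_mem_Ioc_of_mem_farey {H : ℝ} {x : ℚ} (hx : x ∈ Farey H) : x.den ∈ Ioc 0 ⌊H⌋₊ :=
  mem_Ioc.2 ⟨x.den_pos, Nat.le_floor hx.2⟩

lemma num_den_injective : Function.Injective fun x : ℚ ↦ (x.num, x.den) := fun _ _ h ↦
  Rat.ext (congrArg Prod.fst h) (congrArg Prod.snd h)

lemma finite_farey (H : ℝ) : (Farey H).Finite := by
  refine Set.Finite.of_finite_image ?_ num_den_injective.injOn
  refine (Icc (-⌊H⌋₊ : ℤ) ⌊H⌋₊ ×ˢ Ioc 0 ⌊H⌋₊).finite_toSet.subset ?_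
  rintro _ ⟨x, hx, rfl⟩
  exact mem_product.2 ⟨num_mem_Icc_of_mem_farey hx, den_mem_Ioc_of_mem_farey hx⟩

/-- The set `Farey H` as a finite set, for counting. -/
noncomputable def fareyFinset (H : ℝ) : Finset ℚ := (finite_farey H).toFinset

lemma mem_fareyFinset {H : ℝ} {x : ℚ} : x ∈ fareyFinset H ↔ x ∈ Farey H :=
  Set.Finite.mem_toFinset _

lemma neg_mem_fareyFinset {H : ℝ} : ∀ x ∈ fareyFinset H, -x ∈ fareyFinset H := fun _ hx ↦
  mem_fareyFinset.2 (neg_mem_farey (mem_fareyFinset.1 hx))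

lemma card_fareyFinset_le {H : ℝ} (hH : 1 ≤ H) : (#(fareyFinset H) : ℝ) ≤ 3 * H ^ 2 := by
  have hcard : #(fareyFinset H) ≤ #(Icc (-⌊H⌋₊ : ℤ) ⌊H⌋₊ ×ˢ Ioc 0 ⌊H⌋₊) := by
    refine card_le_card_of_injOn _ (fun x hx ↦ ?_) num_den_injective.injOn
    rw [mem_coe, mem_fareyFinset] at hx
    exact mem_product.2 ⟨num_mem_Icc_of_mem_farey hx, den_mem_Ioc_of_mem_farey hx⟩
  have hbox : #(Icc (-⌊H⌋₊ : ℤ) ⌊H⌋₊ ×ˢ Ioc 0 ⌊H⌋₊) = (2 * ⌊H⌋₊ + 1) * ⌊H⌋₊ := by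
    rw [card_product, Int.card_Icc, Nat.card_Ioc]
    congr 1
    omega
  have hfloor : (⌊H⌋₊ : ℝ) ≤ H := Nat.floor_le (zero_le_one.trans hH)
  calc (#(fareyFinset H) : ℝ) ≤ (2 * ⌊H⌋₊ + 1) * ⌊H⌋₊ := mod_cast hbox ▸ hcard
    _ ≤ (2 * H + H) * H := by gcongr
    _ = 3 * H ^ 2 := by ring

lemma card_linearSolutions_farey_le_sum (ι : Type*) [Fintype ι] [DecidableEq ι] (H : ℝ) :
    #(linearSolutions (fareyFinset H) (1 : ι → ℚ)) ≤
      ∑ b ∈ Fintype.piFinset fun _ : ι ↦ Ioc 0 ⌊H⌋₊,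
        #{a ∈ Fintype.piFinset fun _ : ι ↦ Icc (-⌊H⌋₊ : ℤ) ⌊H⌋₊ |
          ∑ i, ((a i : ℤ) : ℚ) / b i = 0} := by
  rw [← card_sigma]
  refine card_le_card_of_injOn (fun x ↦ ⟨fun i ↦ (x i).den, fun i ↦ (x i).num⟩)
    (fun x hx ↦ ?_) fun x _ y _ hxy ↦ ?_
  · obtain ⟨hxF, hx0⟩ := mem_linearSolutions.1 hx
    simp only [mem_fareyFinset] at hxF
    simp only [coe_sigma, Set.mem_sigma_iff, mem_coe, mem_filter, Fintype.mem_piFinset,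
      Rat.num_div_den]
    exact ⟨fun i ↦ den_mem_Ioc_of_mem_farey (hxF i), fun i ↦ num_mem_Icc_of_mem_farey (hxF i),
      by simpa using hx0⟩
  · obtain ⟨hden, hnum⟩ := Sigma.mk.inj hxy
    exact funext fun i ↦ Rat.ext (congrFun (eq_of_heq hnum) i) (congrFun hden i)

lemma card_linearSolutions_farey_le_log (ι : Type*) [Fintype ι] [DecidableEq ι] (H : ℝ) :
    (#(linearSolutions (fareyFinset H) (1 : ι → ℚ)) : ℝ) ≤
      (3 * ⌊H⌋₊) ^ Fintype.card ι *
        (1 + Real.log (⌊H⌋₊ ^ Fintype.card ι)) ^ 2 ^ Fintype.card ι := by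
  calc (#(linearSolutions (fareyFinset H) (1 : ι → ℚ)) : ℝ)
      ≤ ∑ b ∈ Fintype.piFinset fun _ : ι ↦ Ioc 0 ⌊H⌋₊,
          (#{a ∈ Fintype.piFinset fun _ : ι ↦ Icc (-⌊H⌋₊ : ℤ) ⌊H⌋₊ |
            ∑ i, ((a i : ℤ) : ℚ) / b i = 0} : ℝ) :=
        mod_cast card_linearSolutions_farey_le_sum ι H
    _ ≤ ∑ b ∈ Fintype.piFinset fun _ : ι ↦ Ioc 0 ⌊H⌋₊,
          (3 * ⌊H⌋₊ : ℝ) ^ Fintype.card ι * (1 / (univ.lcm b : ℕ)) := by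
        refine sum_le_sum fun b hb ↦ ?_
        have hbN (i) : b i ∈ Ioc 0 ⌊H⌋₊ := Fintype.mem_piFinset.1 hb i
        have hlcm : univ.lcm b ≠ 0 := by
          simpa [Finset.lcm_eq_zero_iff] using fun i ↦ (mem_Ioc.1 (hbN i)).1.ne'
        rw [mul_one_div, le_div_iff₀ (Nat.cast_pos.2 (Nat.pos_of_ne_zero hlcm))]
        exact_mod_cast card_sum_div_eq_zero_mul_lcm_le hbN
    _ ≤ _ := by
        rw [← mul_sum]
        gcongr
        exact sum_one_div_lcm_le ι ⌊H⌋₊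

lemma exists_one_add_log_pow_le (k : ℕ) {M : ℕ} (hM : M ≠ 0) {ε : ℝ} (hε : 0 < ε) :
    ∃ C > 0, ∀ x : ℝ, 1 ≤ x → (1 + Real.log (x ^ k)) ^ M ≤ C * x ^ ε := by
  have hM0 : (0 : ℝ) < M := Nat.cast_pos.2 (Nat.pos_of_ne_zero hM)
  refine ⟨(1 + k / (ε / M)) ^ M, by positivity, fun x hx ↦ ?_⟩
  have hx0 : 0 ≤ x := zero_le_one.trans hx
  have hlog : 1 + Real.log (x ^ k) ≤ (1 + k / (ε / M)) * x ^ (ε / M) := by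
    have hone : 1 ≤ x ^ (ε / M) := Real.one_le_rpow hx (by positivity)
    calc 1 + Real.log (x ^ k) = 1 + k * Real.log x := by rw [Real.log_pow]
      _ ≤ x ^ (ε / M) + k * (x ^ (ε / M) / (ε / M)) := by
          gcongr
          exact Real.log_le_rpow_div hx0 (by positivity)
      _ = (1 + k / (ε / M)) * x ^ (ε / M) := by ring
  have hnonneg : 0 ≤ 1 + Real.log (x ^ k) :=
    add_nonneg zero_le_one (Real.log_nonneg (one_le_pow₀ hx))
  calc (1 + Real.log (x ^ k)) ^ M ≤ ((1 + k / (ε / M)) * x ^ (ε / M)) ^ M := by gcongr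
    _ = (1 + k / (ε / M)) ^ M * x ^ ε := by
      rw [mul_pow, ← Real.rpow_mul_natCast hx0, div_mul_cancel₀ _ hM0.ne']

lemma exists_additiveEnergy_farey_le (l : ℕ) {ε : ℝ} (hε : 0 < ε) :
    ∃ C > 0, ∀ H : ℝ, 1 ≤ H →
      (additiveEnergy (fareyFinset H) l : ℝ) ≤ C * H ^ ((2 * l : ℕ) + ε) := by
  obtain ⟨C, hC, hlog⟩ := exists_one_add_log_pow_le (2 * l) (M := 2 ^ (2 * l)) (by positivity) hε
  refine ⟨3 ^ (2 * l) * C, by positivity, fun H hH ↦ ?_⟩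
  have hH0 : 0 < H := zero_lt_one.trans_le hH
  have hfloor : (⌊H⌋₊ : ℝ) ≤ H := Nat.floor_le hH0.le
  have hfloor1 : (1 : ℝ) ≤ ⌊H⌋₊ := Nat.one_le_cast.2 (Nat.floor_pos.2 hH)
  have h := card_linearSolutions_farey_le_log (Fin (2 * l)) H
  rw [Fintype.card_fin] at h
  calc (additiveEnergy (fareyFinset H) l : ℝ)
      ≤ (3 * ⌊H⌋₊) ^ (2 * l) * (1 + Real.log (⌊H⌋₊ ^ (2 * l))) ^ 2 ^ (2 * l) := h
    _ ≤ (3 * ⌊H⌋₊) ^ (2 * l) * (C * ⌊H⌋₊ ^ ε) := by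
        gcongr
        exact hlog _ hfloor1
    _ ≤ (3 * H) ^ (2 * l) * (C * H ^ ε) := by gcongr
    _ = 3 ^ (2 * l) * C * H ^ ((2 * l : ℕ) + ε) := by
        rw [mul_pow, Real.rpow_add hH0, Real.rpow_natCast]
        ring

lemma exists_card_linearSolutions_farey_le_of_ne_zero (k : ℕ) {ε : ℝ} (hε : 0 < ε) :
    ∃ C > 0, ∀ H : ℝ, 1 ≤ H → ∀ (ι : Type*) [Fintype ι] [DecidableEq ι] (c : ι → ℚ),
      Fintype.card ι = k → (∀ i, c i ≠ 0) →
        (#(linearSolutions (fareyFinset H) c) : ℝ) ≤ C * H ^ (k + ε) := by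
  rcases Nat.even_or_odd' k with ⟨l, rfl | rfl⟩
  · obtain ⟨C, hC, henergy⟩ := exists_additiveEnergy_farey_le l hε
    refine ⟨C, hC, fun H hH ι _ _ c hι hc ↦ ?_⟩
    exact (Nat.cast_le.2 (card_linearSolutions_le_additiveEnergy neg_mem_fareyFinset hc hι)).trans
      (henergy H hH)
  · obtain ⟨C, hC, henergy⟩ := exists_additiveEnergy_farey_le l hε
    obtain ⟨D, hD, henergy'⟩ := exists_additiveEnergy_farey_le (l + 1) hε
    refine ⟨D + C, by positivity, fun H hH ι _ _ c hι hc ↦ ?_⟩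
    have hH0 : 0 < H := zero_lt_one.trans_le hH
    calc (#(linearSolutions (fareyFinset H) c) : ℝ)
        ≤ H⁻¹ * additiveEnergy (fareyFinset H) (l + 1) + H * additiveEnergy (fareyFinset H) l :=
          card_linearSolutions_le_add_additiveEnergy neg_mem_fareyFinset hc hι hH0
      _ ≤ H⁻¹ * (D * H ^ ((2 * (l + 1) : ℕ) + ε)) + H * (C * H ^ ((2 * l : ℕ) + ε)) := by
          gcongr
          · exact henergy' H hH
          · exact henergy H hH
      _ = (D + C) * H ^ ((2 * l + 1 : ℕ) + ε) := by
          have hexp₁ : H⁻¹ * H ^ ((2 * (l + 1) : ℕ) + ε) = H ^ ((2 * l + 1 : ℕ) + ε) := by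
            rw [← Real.rpow_neg_one, ← Real.rpow_add hH0]
            push_cast
            ring_nf
          have hexp₂ : H * H ^ ((2 * l : ℕ) + ε) = H ^ ((2 * l + 1 : ℕ) + ε) := by
            rw [← Real.rpow_one_add' hH0.le (by positivity)]
            push_cast
            ring_nf
          rw [← hexp₂] at hexp₁ ⊢
          linear_combination D * hexp₁

lemma exists_card_linearSolutions_farey_le (ι : Type*) [Fintype ι] [DecidableEq ι] {ε : ℝ}
    (hε : 0 < ε) :
    ∃ C > 0, ∀ H : ℝ, 1 ≤ H → ∀ c : ι → ℚ,
      (#(linearSolutions (fareyFinset H) c) : ℝ) ≤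
        C * H ^ (2 * Fintype.card ι - hammingNorm c + ε) := by
  choose C hC hbound using fun k ↦ exists_card_linearSolutions_farey_le_of_ne_zero k hε
  refine ⟨3 ^ Fintype.card ι * ∑ k ∈ range (Fintype.card ι + 1), C k, ?_, fun H hH c ↦ ?_⟩
  · exact mul_pos (by positivity) (sum_pos (fun k _ ↦ hC k) nonempty_range_add_one)
  have hH0 : 0 < H := zero_lt_one.trans_le hH
  obtain ⟨j, hj⟩ := Nat.exists_eq_add_of_le (hammingNorm_le_card_fintype (x := c))
  have hCle : C (hammingNorm c) ≤ ∑ k ∈ range (Fintype.card ι + 1), C k :=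
    single_le_sum (fun k _ ↦ (hC k).le) (mem_range.2 (by omega))
  have hsupp : (#(linearSolutions (fareyFinset H) fun i : {i // c i ≠ 0} ↦ c i) : ℝ) ≤
      C (hammingNorm c) * H ^ (hammingNorm c + ε) :=
    hbound _ H hH _ _ (by rw [Fintype.card_subtype, hammingNorm]) fun i ↦ i.2
  calc (#(linearSolutions (fareyFinset H) c) : ℝ)
      ≤ #(fareyFinset H) ^ j *
          #(linearSolutions (fareyFinset H) fun i : {i // c i ≠ 0} ↦ c i) := by
        have h := card_linearSolutions_le_mul_card_support (fareyFinset H) c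
        rw [hj, Nat.add_sub_cancel_left] at h
        exact_mod_cast h
    _ ≤ (3 * H ^ 2) ^ j * (C (hammingNorm c) * H ^ (hammingNorm c + ε)) := by
        gcongr
        exact card_fareyFinset_le hH
    _ = 3 ^ j * C (hammingNorm c) * H ^ (2 * Fintype.card ι - hammingNorm c + ε) := by
        have hexp : (2 * Fintype.card ι - hammingNorm c + ε : ℝ) =
            (2 * j : ℕ) + (hammingNorm c + ε) := by
          rw [hj]
          push_cast
          ring
        rw [hexp, Real.rpow_add hH0 (2 * j : ℕ), Real.rpow_natCast]
        ring
    _ ≤ _ := by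
        gcongr
        · exact (hC _).le
        · norm_num
        · omega

lemma exists_card_dotProduct_mem_farey_le (κ : Type*) [Fintype κ] [DecidableEq κ] {ε : ℝ}
    (hε : 0 < ε) :
    ∃ C > 0, ∀ H : ℝ, 1 ≤ H → ∀ c : κ → ℚ,
      (#{w ∈ Fintype.piFinset fun _ : κ ↦ fareyFinset H | c ⬝ᵥ w ∈ fareyFinset H} : ℝ) ≤
        C * H ^ (2 * Fintype.card κ + 1 - hammingNorm c + ε) := by
  obtain ⟨C, hC, hbound⟩ := exists_card_linearSolutions_farey_le (Option κ) hε
  refine ⟨C, hC, fun H hH c ↦ ?_⟩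
  let d : Option κ → ℚ := fun o ↦ o.elim (-1) c
  have hd : hammingNorm d = hammingNorm c + 1 := by
    have hnone : d none ≠ 0 := neg_ne_zero.2 one_ne_zero
    rw [hammingNorm, card_filter, Fintype.sum_option, if_pos hnone, add_comm, hammingNorm,
      card_filter]
    rfl
  calc (#{w ∈ Fintype.piFinset fun _ : κ ↦ fareyFinset H | c ⬝ᵥ w ∈ fareyFinset H} : ℝ)
      ≤ #(linearSolutions (fareyFinset H) d) := by
        refine Nat.cast_le.2 (card_le_card_of_injOn (fun w o ↦ o.elim (c ⬝ᵥ w) w)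
          (fun w hw ↦ ?_) fun w _ w' _ hww' ↦ funext fun i ↦ congrFun hww' (some i))
        obtain ⟨hwF, hcw⟩ := mem_filter.1 hw
        refine mem_linearSolutions.2 ⟨?_, ?_⟩
        · rintro (_ | i)
          exacts [hcw, Fintype.mem_piFinset.1 hwF i]
        · simp [d, Fintype.sum_option, dotProduct]
    _ ≤ C * H ^ (2 * Fintype.card (Option κ) - hammingNorm d + ε) := hbound H hH d
    _ = C * H ^ (2 * Fintype.card κ + 1 - hammingNorm c + ε) := by
        rw [hd, Fintype.card_option]
        push_cast
        ring_nf

end Farey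

section Fibering

variable {σ α β ι : Type*} [Fintype α] [Fintype ι] [DecidableEq β]

lemma card_le_pow_mul_card_image_comp {f : σ → α → β} (hf : f.Injective) {e : ι → α}
    (he : e.Injective) {S : Finset σ} (T : (ι → β) → Finset β) {t : ℕ}
    (hT : ∀ x ∈ S, ∀ a, f x a ∈ T (f x ∘ e)) (ht : ∀ x ∈ S, #(T (f x ∘ e)) ≤ t) :
    #S ≤ t ^ (Fintype.card α - Fintype.card ι) * #(S.image fun x ↦ f x ∘ e) := by
  classical
  refine card_le_mul_card_image S _ fun y hy ↦ ?_
  obtain ⟨x₀, hx₀, rfl⟩ := mem_image.1 hy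
  have hcompl : Fintype.card {a // a ∉ Set.range e} = Fintype.card α - Fintype.card ι := by
    rw [Fintype.card_subtype_compl]
    exact congrArg (Fintype.card α - ·) (Set.card_range_of_injective he)
  calc #{x ∈ S | f x ∘ e = f x₀ ∘ e}
      ≤ #(Fintype.piFinset fun _ : {a // a ∉ Set.range e} ↦ T (f x₀ ∘ e)) := by
        refine card_le_card_of_injOn (fun x a ↦ f x a) (fun x hx ↦ ?_) fun x hx y hy hxy ↦ hf ?_
        · obtain ⟨hxS, hxe⟩ := mem_filter.1 hx
          exact mem_coe.2 <| Fintype.mem_piFinset.2 fun a ↦ hxe ▸ hT x hxS a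
        · funext a
          by_cases ha : a ∈ Set.range e
          · obtain ⟨i, rfl⟩ := ha
            exact congrFun ((mem_filter.1 hx).2.trans (mem_filter.1 hy).2.symm) i
          · exact congrFun hxy ⟨a, ha⟩
    _ = #(T (f x₀ ∘ e)) ^ (Fintype.card α - Fintype.card ι) := by
        rw [Fintype.card_piFinset, prod_const, card_univ, hcompl]
    _ ≤ t ^ (Fintype.card α - Fintype.card ι) := Nat.pow_le_pow_left (ht x₀ hx₀) _

end Fibering

section VectorsInSubspaces

open Matrix

variable {K ι κ : Type*} [Field K]

lemma card_le_pow_finrank_of_subset [Finite ι] {F : Finset K} (W : Submodule K (ι → K))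
    {S : Finset (ι → K)} (hSF : ∀ v ∈ S, ∀ i, v i ∈ F) (hSW : ∀ v ∈ S, v ∈ W) :
    #S ≤ #F ^ Module.finrank K W := by
  let coord (i : ι) : Module.Dual K W := (LinearMap.proj i).comp W.subtype
  have hspan : Submodule.span K (Set.range coord) = ⊤ :=
    Submodule.span_eq_top_of_ne_zero fun z hz ↦ by
      obtain ⟨i, hi⟩ := Function.ne_iff.1 fun h ↦ hz (Subtype.ext h)
      exact ⟨coord i, ⟨i, rfl⟩, hi⟩
  obtain ⟨b, hb, hb_span, -⟩ := Submodule.exists_fun_fin_finrank_span_eq K (Set.range coord)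
  choose c hc using hb
  calc #S ≤ #(Fintype.piFinset fun _ : Fin _ ↦ F) := by
        refine card_le_card_of_injOn (fun v t ↦ v (c t))
          (fun v hv ↦ mem_coe.2 <| Fintype.mem_piFinset.2 fun t ↦ hSF v hv (c t))
          fun v hv w hw hvw ↦ funext fun i ↦ ?_
        let x : W := ⟨v, hSW v hv⟩ - ⟨w, hSW w hw⟩
        have hx : Submodule.span K (Set.range b) ≤ LinearMap.ker (Module.Dual.eval K W x) := by
          rw [Submodule.span_le]
          rintro _ ⟨t, rfl⟩
          rw [← hc t]
          exact sub_eq_zero.2 (congrFun hvw t)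
        exact sub_eq_zero.1 <| hx <| hb_span ▸
          Submodule.subset_span (Set.mem_range_self (f := coord) i)
    _ = #F ^ Module.finrank K W := by
        rw [Fintype.card_piFinset, prod_const, card_univ, Fintype.card_fin, hspan, finrank_top,
          Subspace.dual_finrank_eq]

lemma card_le_two_pow_mul_pow_of_vecMul [DecidableEq K] [Finite ι] [Fintype κ] {F : Finset K}
    (hF : F.Nonempty) (P : Matrix κ ι K) {k : ℕ} {S : Finset (ι → K)}
    (hSF : ∀ v ∈ S, ∀ i, v i ∈ F) (hSP : ∀ v ∈ S, ∃ w : κ → K, hammingNorm w ≤ k ∧ w ᵥ* P = v) :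
    #S ≤ 2 ^ Fintype.card κ * #F ^ k := by
  classical
  let W (T : Finset κ) : Submodule K (ι → K) := Submodule.span K (T.image P)
  calc #S ≤ #(({T | #T ≤ k} : Finset (Finset κ)).biUnion fun T ↦ {v ∈ S | v ∈ W T}) := by
        refine card_le_card fun v hv ↦ ?_
        obtain ⟨w, hwk, rfl⟩ := hSP v hv
        refine mem_biUnion.2 ⟨univ.filter (w · ≠ 0), mem_filter.2 ⟨mem_univ _, hwk⟩,
          mem_filter.2 ⟨hv, ?_⟩⟩
        rw [vecMul_eq_sum]
        refine Submodule.sum_mem _ fun l _ ↦ ?_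
        by_cases hl : w l = 0
        · rw [hl, zero_smul]
          exact Submodule.zero_mem _
        · exact Submodule.smul_mem _ _ <| Submodule.subset_span <|
            mem_coe.2 <| mem_image_of_mem P <| mem_filter.2 ⟨mem_univ l, hl⟩
    _ ≤ ∑ T : Finset κ with #T ≤ k, #F ^ k := by
        refine card_biUnion_le.trans <| sum_le_sum fun T hT ↦ ?_
        have hW : Module.finrank K (W T) ≤ k :=
          (finrank_span_finset_le_card _).trans (card_image_le.trans (mem_filter.1 hT).2)
        exact (card_le_pow_finrank_of_subset (W T) (fun v hv ↦ hSF v (mem_filter.1 hv).1)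
          fun v hv ↦ (mem_filter.1 hv).2).trans (Nat.pow_le_pow_right hF.card_pos hW)
    _ ≤ 2 ^ Fintype.card κ * #F ^ k := by
        rw [sum_const, smul_eq_mul, ← Fintype.card_finset]
        exact Nat.mul_le_mul_right _ (card_le_univ _)

end VectorsInSubspaces

section RowWeight

variable {R m κ : Type*} [Zero R] [DecidableEq R] [Fintype m] [Fintype κ]

/-- The largest number of nonzero entries in a row of `M`. -/
def maxRowWeight (M : Matrix m κ R) : ℕ :=
  univ.sup fun i ↦ hammingNorm (M i)

lemma hammingNorm_le_maxRowWeight (M : Matrix m κ R) (i : m) :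
    hammingNorm (M i) ≤ maxRowWeight M :=
  le_sup (f := fun i ↦ hammingNorm (M i)) (mem_univ i)

lemma exists_hammingNorm_eq_maxRowWeight [Nonempty m] (M : Matrix m κ R) :
    ∃ i, hammingNorm (M i) = maxRowWeight M := by
  obtain ⟨i, -, hi⟩ := exists_mem_eq_sup univ univ_nonempty fun i ↦ hammingNorm (M i)
  exact ⟨i, hi.symm⟩

end RowWeight

section Skeletons

open Matrix

variable {K m n κ : Type*} [Field K] [Fintype κ] [DecidableEq κ]

/-- The matrix expressing the rows of `C` in terms of its rows indexed by `e`, which are meant to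
form a nonsingular block (otherwise the value is junk). -/
noncomputable def rowCoeff (e : κ → m) (C : Matrix m κ K) : Matrix m κ K := C * (C.submatrix e id)⁻¹

lemma rowCoeff_mul_submatrix {e : κ → m} {C : Matrix m κ K} (hC : IsUnit (C.submatrix e id)) :
    rowCoeff e C * C.submatrix e id = C :=
  nonsing_inv_mul_cancel_right _ _ ((isUnit_iff_isUnit_det _).1 hC)

lemma submatrix_rowCoeff {e : κ → m} {C : Matrix m κ K} (hC : IsUnit (C.submatrix e id)) :
    (rowCoeff e C).submatrix e id = 1 :=
  mul_nonsing_inv _ ((isUnit_iff_isUnit_det _).1 hC)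

lemma maxRowWeight_rowCoeff_mem_Icc [Fintype m] [Nonempty κ] [DecidableEq K] {e : κ → m}
    {C : Matrix m κ K} (hC : IsUnit (C.submatrix e id)) :
    maxRowWeight (rowCoeff e C) ∈ Icc 1 (Fintype.card κ) := by
  refine mem_Icc.2 ⟨?_, Finset.sup_le fun i _ ↦ hammingNorm_le_card_fintype⟩
  obtain ⟨l⟩ := ‹Nonempty κ›
  have hl : rowCoeff e C (e l) l = 1 := by
    simpa using congrFun₂ (submatrix_rowCoeff hC) l l
  refine le_trans (hammingNorm_pos_iff.2 fun h ↦ ?_) (hammingNorm_le_maxRowWeight _ (e l))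
  exact one_ne_zero (hl.symm.trans (congrFun h l))

/-- The rows `e` and the columns `g` of `A` intersect in a nonsingular block, and the rows `e` span
the row space of `A`, so that `A` is determined by these rows and columns. -/
structure IsSkeleton (A : Matrix m n K) (e : κ → m) (g : κ → n) : Prop where
  isUnit : IsUnit (A.submatrix e g)
  rowCoeff_mul : rowCoeff e (A.submatrix id g) * A.submatrix e id = A

namespace IsSkeleton

variable {A : Matrix m n K} {e : κ → m} {g : κ → n}

lemma injective_left (h : IsSkeleton A e g) : e.Injective := fun a b hab ↦
  (linearIndependent_rows_iff_isUnit.2 h.isUnit).injective <| funext fun j ↦ by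
    simp only [row_apply, submatrix_apply, hab]

lemma injective_right (h : IsSkeleton A e g) : g.Injective := fun a b hab ↦
  (linearIndependent_cols_iff_isUnit.2 h.isUnit).injective <| funext fun i ↦ by
    simp only [col_apply, submatrix_apply, hab]

end IsSkeleton

lemma exists_linearIndependent_row_submatrix [Finite m] [Fintype n] {A : Matrix m n K} {r : ℕ}
    (hA : A.rank = r) : ∃ e : Fin r → m, LinearIndependent K (A.submatrix e id).row ∧
      Submodule.span K (Set.range (A.submatrix e id).row) =
        Submodule.span K (Set.range A.row) := by
  rw [rank_eq_finrank_span_row] at hA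
  subst hA
  obtain ⟨f, hf, hf_span, hf_indep⟩ := Submodule.exists_fun_fin_finrank_span_eq K (Set.range A.row)
  choose e he using hf
  obtain rfl : (A.submatrix e id).row = f := funext he
  exact ⟨e, hf_indep, hf_span⟩

lemma exists_isSkeleton [Finite m] [Fintype n] {A : Matrix m n K} {r : ℕ} (hA : A.rank = r) :
    ∃ (e : Fin r → m) (g : Fin r → n), IsSkeleton A e g := by
  obtain ⟨e, he_indep, he_span⟩ := exists_linearIndependent_row_submatrix hA
  have hB : (A.submatrix e id)ᵀ.rank = r := by
    rw [rank_transpose, he_indep.rank_matrix, Fintype.card_fin]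
  obtain ⟨g, hg, -⟩ := exists_linearIndependent_row_submatrix hB
  have hP : IsUnit (A.submatrix e g) :=
    (isUnit_transpose _).1 (linearIndependent_rows_iff_isUnit.1 hg)
  have hrow (i : m) : ∃ c : Fin r → K, c ᵥ* A.submatrix e id = A i := by
    have hi : A i ∈ Submodule.span K (Set.range (A.submatrix e id).row) :=
      he_span ▸ Submodule.subset_span ⟨i, rfl⟩
    obtain ⟨c, hc⟩ := (Submodule.mem_span_range_iff_exists_fun K).1 hi
    exact ⟨c, (vecMul_eq_sum c _).trans hc⟩
  choose c hc using hrow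
  have hA_eq : of c * A.submatrix e id = A := funext hc
  have hC_eq : of c * A.submatrix e g = A.submatrix id g :=
    congrArg (submatrix · id g) hA_eq
  refine ⟨e, g, hP, ?_⟩
  calc rowCoeff e (A.submatrix id g) * A.submatrix e id
      = of c * A.submatrix e g * (A.submatrix e g)⁻¹ * A.submatrix e id := by
        rw [hC_eq]
        rfl
    _ = A := by
        rw [mul_nonsing_inv_cancel_right _ _ ((isUnit_iff_isUnit_det _).1 hP), hA_eq]

end Skeletons

section CountingSkeletons

open Matrix

variable {K m n κ : Type*} [Field K] [DecidableEq K] [Fintype m] [Fintype κ] [DecidableEq κ]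
  {F : Finset K}

lemma card_le_of_mulVec_comp [Nonempty m] {X : ℕ → ℕ}
    (hX : ∀ c : κ → K, #{w ∈ Fintype.piFinset fun _ : κ ↦ F | c ⬝ᵥ w ∈ F} ≤ X (hammingNorm c))
    (M : Matrix m κ K) (e : κ → m) {S : Finset (m → K)} (hSF : ∀ v ∈ S, ∀ i, v i ∈ F)
    (hSM : ∀ v ∈ S, M *ᵥ (v ∘ e) = v) : #S ≤ X (maxRowWeight M) := by
  obtain ⟨i, hi⟩ := exists_hammingNorm_eq_maxRowWeight M
  calc #S ≤ #{w ∈ Fintype.piFinset fun _ : κ ↦ F | M i ⬝ᵥ w ∈ F} := by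
        refine card_le_card_of_injOn (· ∘ e) (fun v hv ↦ mem_coe.2 <| mem_filter.2
          ⟨Fintype.mem_piFinset.2 fun l ↦ hSF v hv (e l), ?_⟩) fun v hv w hw hvw ↦ ?_
        · have hvi : M i ⬝ᵥ (v ∘ e) = v i := congrFun (hSM v hv) i
          simpa only [hvi] using hSF v hv i
        · rw [← hSM v hv, ← hSM w hw]
          exact congrArg (M *ᵥ ·) hvw
    _ ≤ X (maxRowWeight M) := hi ▸ hX (M i)

lemma card_le_of_maxRowWeight_rowCoeff_le (hF : F.Nonempty) {e : κ → m} (he : e.Injective) {k : ℕ}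
    {S : Finset (Matrix m κ K)} (hSF : ∀ C ∈ S, ∀ i l, C i l ∈ F)
    (hS : ∀ C ∈ S, IsUnit (C.submatrix e id)) (hSk : ∀ C ∈ S, maxRowWeight (rowCoeff e C) ≤ k) :
    #S ≤ (2 ^ Fintype.card κ * #F ^ k) ^ (Fintype.card m - Fintype.card κ) *
      #F ^ (Fintype.card κ * Fintype.card κ) := by
  classical
  let T (P : Matrix κ κ K) : Finset (κ → K) :=
    {v ∈ Fintype.piFinset fun _ ↦ F | ∃ w : κ → K, hammingNorm w ≤ k ∧ w ᵥ* P = v}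
  have hT (P : Matrix κ κ K) : #(T P) ≤ 2 ^ Fintype.card κ * #F ^ k :=
    card_le_two_pow_mul_pow_of_vecMul hF P
      (fun v hv ↦ Fintype.mem_piFinset.1 (mem_filter.1 hv).1) fun v hv ↦ (mem_filter.1 hv).2
  have hbase : #(S.image fun C ↦ C.row ∘ e) ≤ #F ^ (Fintype.card κ * Fintype.card κ) := by
    calc #(S.image fun C ↦ C.row ∘ e)
        ≤ #(Fintype.piFinset fun _ : κ ↦ Fintype.piFinset fun _ : κ ↦ F) := by
          refine card_le_card <| image_subset_iff.2 fun C hC ↦ ?_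
          exact Fintype.mem_piFinset.2 fun l ↦ Fintype.mem_piFinset.2 (hSF C hC (e l))
      _ = #F ^ (Fintype.card κ * Fintype.card κ) := by
          simp only [Fintype.card_piFinset, prod_const, card_univ, pow_mul]
  refine (card_le_pow_mul_card_image_comp (f := row) (fun _ _ h ↦ h) he T (fun C hC i ↦ ?_)
    fun C _ ↦ hT _).trans (Nat.mul_le_mul_left _ hbase)
  refine mem_filter.2 ⟨Fintype.mem_piFinset.2 (hSF C hC i), rowCoeff e C i,
    (hammingNorm_le_maxRowWeight _ i).trans (hSk C hC), ?_⟩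
  exact congrFun (rowCoeff_mul_submatrix (hS C hC)) i

lemma card_le_of_isSkeleton [Nonempty m] [Fintype n] (hF : F.Nonempty) {X : ℕ → ℕ}
    (hX : ∀ c : κ → K, #{w ∈ Fintype.piFinset fun _ : κ ↦ F | c ⬝ᵥ w ∈ F} ≤ X (hammingNorm c))
    {e : κ → m} {g : κ → n} {k : ℕ} {S : Finset (Matrix m n K)}
    (hSF : ∀ A ∈ S, ∀ i j, A i j ∈ F) (hS : ∀ A ∈ S, IsSkeleton A e g)
    (hSk : ∀ A ∈ S, maxRowWeight (rowCoeff e (A.submatrix id g)) = k) :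
    #S ≤ X k ^ (Fintype.card n - Fintype.card κ) *
      ((2 ^ Fintype.card κ * #F ^ k) ^ (Fintype.card m - Fintype.card κ) *
        #F ^ (Fintype.card κ * Fintype.card κ)) := by
  classical
  obtain rfl | ⟨A₀, hA₀⟩ := S.eq_empty_or_nonempty
  · exact Nat.zero_le _
  let T (cols : κ → m → K) : Finset (m → K) :=
    {v ∈ Fintype.piFinset fun _ ↦ F | rowCoeff e (of cols)ᵀ *ᵥ (v ∘ e) = v}
  have hT (A : Matrix m n K) (hA : A ∈ S) : #(T (A.col ∘ g)) ≤ X k :=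
    hSk A hA ▸ card_le_of_mulVec_comp hX _ e
      (fun v hv ↦ Fintype.mem_piFinset.1 (mem_filter.1 hv).1) fun v hv ↦ (mem_filter.1 hv).2
  have hbase : #(S.image fun A ↦ A.col ∘ g) ≤
      (2 ^ Fintype.card κ * #F ^ k) ^ (Fintype.card m - Fintype.card κ) *
        #F ^ (Fintype.card κ * Fintype.card κ) := by
    calc #(S.image fun A ↦ A.col ∘ g)
        = #((S.image fun A ↦ A.submatrix id g).image col) := by rw [image_image]; rfl
      _ ≤ #(S.image fun A ↦ A.submatrix id g) := card_image_le
      _ ≤ _ := card_le_of_maxRowWeight_rowCoeff_le hF (hS A₀ hA₀).injective_left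
        (forall_mem_image.2 fun A hA i l ↦ hSF A hA i (g l))
        (forall_mem_image.2 fun A hA ↦ (hS A hA).isUnit)
        (forall_mem_image.2 fun A hA ↦ (hSk A hA).le)
  refine (card_le_pow_mul_card_image_comp (f := col) transpose_injective
    (hS A₀ hA₀).injective_right T (fun A hA j ↦ ?_) hT).trans (Nat.mul_le_mul_left _ hbase)
  refine mem_filter.2 ⟨Fintype.mem_piFinset.2 fun i ↦ hSF A hA i j, ?_⟩
  exact congrArg (col · j) (hS A hA).rowCoeff_mul

lemma card_le_of_rank_eq [Nonempty m] [Fintype n] (hF : F.Nonempty) {r : ℕ} [NeZero r] {X : ℕ → ℕ}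
    (hX : ∀ c : Fin r → K,
      #{w ∈ Fintype.piFinset fun _ : Fin r ↦ F | c ⬝ᵥ w ∈ F} ≤ X (hammingNorm c))
    {S : Finset (Matrix m n K)} (hSF : ∀ A ∈ S, ∀ i j, A i j ∈ F) (hS : ∀ A ∈ S, A.rank = r) :
    #S ≤ Fintype.card m ^ r * Fintype.card n ^ r * ∑ k ∈ Icc 1 r,
      X k ^ (Fintype.card n - r) *
        ((2 ^ r * #F ^ k) ^ (Fintype.card m - r) * #F ^ (r * r)) := by
  classical
  let S' (q : (Fin r → m) × (Fin r → n)) (k : ℕ) : Finset (Matrix m n K) :=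
    {A ∈ S | IsSkeleton A q.1 q.2 ∧ maxRowWeight (rowCoeff q.1 (A.submatrix id q.2)) = k}
  calc #S ≤ #(univ.biUnion fun q ↦ (Icc 1 r).biUnion (S' q)) := by
        refine card_le_card fun A hA ↦ ?_
        obtain ⟨e, g, h⟩ := exists_isSkeleton (hS A hA)
        refine mem_biUnion.2 ⟨(e, g), mem_univ _, mem_biUnion.2 ⟨_, ?_, mem_filter.2 ⟨hA, h, rfl⟩⟩⟩
        simpa only [Fintype.card_fin] using
          maxRowWeight_rowCoeff_mem_Icc (C := A.submatrix id g) h.isUnit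
    _ ≤ ∑ _q : (Fin r → m) × (Fin r → n), ∑ k ∈ Icc 1 r, X k ^ (Fintype.card n - r) *
        ((2 ^ r * #F ^ k) ^ (Fintype.card m - r) * #F ^ (r * r)) := by
        refine card_biUnion_le.trans <| sum_le_sum fun q _ ↦ card_biUnion_le.trans <|
          sum_le_sum fun k _ ↦ ?_
        simpa only [Fintype.card_fin] using card_le_of_isSkeleton hF hX
          (fun A hA ↦ hSF A (mem_filter.1 hA).1) (fun A hA ↦ (mem_filter.1 hA).2.1)
          fun A hA ↦ (mem_filter.1 hA).2.2
    _ = _ := by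
        rw [sum_const, card_univ, smul_eq_mul, Fintype.card_prod, Fintype.card_fun,
          Fintype.card_fun, Fintype.card_fin]

end CountingSkeletons

section FareyMatrices

/-- The set `L_{m,n,r}(ℚ;H)` of `m × n` matrices of rank `r` with entries of height at most `H`. -/
def fareyMatrices (m n r : ℕ) (H : ℝ) : Set (Matrix (Fin m) (Fin n) ℚ) :=
  {A | (∀ i j, A i j ∈ Farey H) ∧ A.rank = r}

lemma finite_fareyMatrices (m n r : ℕ) (H : ℝ) : (fareyMatrices m n r H).Finite :=
  (Set.Finite.pi' fun _ ↦ Set.Finite.pi' fun _ ↦ finite_farey H).subset fun _ hA ↦ hA.1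

lemma ncard_fareyMatrices_zero_le (m n : ℕ) (H : ℝ) : (fareyMatrices m n 0 H).ncard ≤ 1 := by
  refine (Set.ncard_le_one (finite_fareyMatrices m n 0 H)).2 fun A hA B hB ↦ ?_
  have hzero {A : Matrix (Fin m) (Fin n) ℚ} (hA : A.rank = 0) : A = 0 := by
    rwa [Matrix.rank_eq_finrank_span_row, Submodule.finrank_eq_zero, Submodule.span_eq_bot,
      Set.forall_mem_range, ← funext_iff] at hA
  rw [hzero hA.2, hzero hB.2]

lemma fareyMatrices_eq_empty {m n r : ℕ} (hr : m < r ∨ n < r) (H : ℝ) :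
    fareyMatrices m n r H = ∅ := by
  refine Set.eq_empty_of_forall_notMem fun A hA ↦ ?_
  have hm : A.rank ≤ m := A.rank_le_height
  have hn : A.rank ≤ n := A.rank_le_width
  have hrank : A.rank = r := hA.2
  omega

lemma ncard_fareyMatrices_le (m n r : ℕ) [NeZero m] [NeZero r] {H : ℝ} (hH : 1 ≤ H) {X : ℕ → ℕ}
    (hX : ∀ c : Fin r → ℚ, #{w ∈ Fintype.piFinset fun _ : Fin r ↦ fareyFinset H |
      c ⬝ᵥ w ∈ fareyFinset H} ≤ X (hammingNorm c)) :
    (fareyMatrices m n r H).ncard ≤ m ^ r * n ^ r * ∑ k ∈ Icc 1 r, X k ^ (n - r) *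
      ((2 ^ r * #(fareyFinset H) ^ k) ^ (m - r) * #(fareyFinset H) ^ (r * r)) := by
  have hS {A} (hA : A ∈ (finite_fareyMatrices m n r H).toFinset) : A ∈ fareyMatrices m n r H :=
    (Set.Finite.mem_toFinset _).1 hA
  rw [Set.ncard_eq_toFinset_card _ (finite_fareyMatrices m n r H)]
  simpa only [Fintype.card_fin] using
    card_le_of_rank_eq ⟨0, mem_fareyFinset.2 (zero_mem_farey hH)⟩ hX
      (fun A hA i j ↦ mem_fareyFinset.2 ((hS hA).1 i j)) fun A hA ↦ (hS hA).2

lemma pow_mul_pow_eq_mul_rpow {H : ℝ} (hH : 0 < H) (C x y : ℝ) (b d k r : ℕ) :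
    (C * H ^ (x + y)) ^ b * ((2 ^ r * (3 * H ^ 2) ^ k) ^ d * (3 * H ^ 2) ^ (r * r)) =
      C ^ b * ((2 ^ r * 3 ^ k) ^ d * 3 ^ (r * r)) *
        H ^ (x * b + 2 * k * d + 2 * r ^ 2 + y * b) := by
  have hpow : (H ^ (x + y)) ^ b * (H ^ 2) ^ (k * d + r * r) =
      H ^ (x * b + 2 * k * d + 2 * r ^ 2 + y * b) := by
    rw [← Real.rpow_mul_natCast hH.le, ← pow_mul, ← Real.rpow_natCast, ← Real.rpow_add hH]
    push_cast
    ring_nf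
  rw [← hpow]
  simp only [mul_pow, ← pow_mul, pow_add]
  ring

lemma exists_ncard_fareyMatrices_le_sum {m n r : ℕ} (hr : 0 < r) (hm : r ≤ m) (hn : r ≤ n) {ε : ℝ}
    (hε : 0 < ε) :
    ∃ C : ℕ → ℝ, (∀ k, 0 ≤ C k) ∧ ∀ H : ℝ, 1 ≤ H → ((fareyMatrices m n r H).ncard : ℝ) ≤
      ∑ k ∈ Icc 1 r, C k *
        H ^ ((2 * r + 1 - k) * (n - r) + 2 * k * (m - r) + 2 * (r : ℝ) ^ 2 + ε) := by
  have : NeZero m := ⟨(hr.trans_le hm).ne'⟩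
  have : NeZero r := ⟨hr.ne'⟩
  let δ : ℝ := ε / (n - r + 1)
  have hnr : (0 : ℝ) ≤ n - r := sub_nonneg.2 (Nat.cast_le.2 hn)
  have hδ : 0 < δ := by positivity
  have hδε : δ * (n - r) ≤ ε := by
    rw [div_mul_eq_mul_div, div_le_iff₀ (by positivity)]
    nlinarith
  obtain ⟨C, hC, hcount⟩ := exists_card_dotProduct_mem_farey_le (Fin r) hδ
  refine ⟨fun k ↦ m ^ r * n ^ r * (C ^ (n - r) * ((2 ^ r * 3 ^ k) ^ (m - r) * 3 ^ (r * r))),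
    fun k ↦ by positivity, fun H hH ↦ ?_⟩
  have hH0 : 0 < H := zero_lt_one.trans_le hH
  let X (k : ℕ) : ℕ := ⌊C * H ^ ((2 * r + 1 - k : ℝ) + δ)⌋₊
  have hX (k : ℕ) : (X k : ℝ) ≤ C * H ^ ((2 * r + 1 - k : ℝ) + δ) := Nat.floor_le (by positivity)
  have hbound := ncard_fareyMatrices_le m n r hH (X := X) fun c ↦
    Nat.le_floor (by simpa only [Fintype.card_fin] using hcount H hH c)
  refine (Nat.cast_le.2 hbound).trans ?_
  push_cast
  rw [mul_sum]
  refine sum_le_sum fun k _ ↦ ?_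
  rw [mul_assoc _ (C ^ (n - r) * _)]
  refine mul_le_mul_of_nonneg_left ?_ (by positivity)
  calc (X k : ℝ) ^ (n - r) * ((2 ^ r * (#(fareyFinset H) : ℝ) ^ k) ^ (m - r) *
        (#(fareyFinset H) : ℝ) ^ (r * r))
      ≤ (C * H ^ ((2 * r + 1 - k : ℝ) + δ)) ^ (n - r) *
        ((2 ^ r * (3 * H ^ 2) ^ k) ^ (m - r) * (3 * H ^ 2) ^ (r * r)) := by
        gcongr
        exacts [hX k, card_fareyFinset_le hH, card_fareyFinset_le hH]
    _ ≤ _ := by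
        rw [pow_mul_pow_eq_mul_rpow hH0, Nat.cast_sub hn, Nat.cast_sub hm]
        gcongr

lemma exists_ncard_fareyMatrices_le_rpow (m n r : ℕ) {ε : ℝ} (hε : 0 < ε) :
    ∃ C : ℝ, ∀ H : ℝ, 1 ≤ H → ∀ E : ℝ, (r = 0 → 0 ≤ E) →
      (∀ k ∈ Icc 1 r, (2 * r + 1 - k) * (n - r) + 2 * k * (m - r) + 2 * (r : ℝ) ^ 2 ≤ E) →
        ((fareyMatrices m n r H).ncard : ℝ) ≤ C * H ^ (E + ε) := by
  rcases r.eq_zero_or_pos with rfl | hr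
  · refine ⟨1, fun H hH E hE _ ↦ ?_⟩
    have hpow : 1 ≤ H ^ (E + ε) := Real.one_le_rpow hH (add_nonneg (hE rfl) hε.le)
    exact (Nat.cast_le_one.2 (ncard_fareyMatrices_zero_le m n H)).trans (by rwa [one_mul])
  by_cases hrank : m < r ∨ n < r
  · exact ⟨0, fun H _ E _ _ ↦ by simp [fareyMatrices_eq_empty hrank H]⟩
  obtain ⟨hm, hn⟩ : r ≤ m ∧ r ≤ n := by simpa only [not_or, not_lt] using hrank
  obtain ⟨C, hC, hbound⟩ := exists_ncard_fareyMatrices_le_sum hr hm hn hε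
  refine ⟨∑ k ∈ Icc 1 r, C k, fun H hH E _ hE ↦ (hbound H hH).trans ?_⟩
  rw [sum_mul]
  gcongr with k hk
  exacts [hC k, hE k hk]

end FareyMatrices

theorem stmt0_general (m n r : ℕ) {ε : ℝ} (hε : 0 < ε) :
    ∃ C : ℝ, ∀ H : ℝ, 1 ≤ H →
      (n + r ≤ 2 * m → ((fareyMatrices m n r H).ncard : ℝ) ≤
        C * H ^ ((2 * m * r + n * r + n : ℝ) - r ^ 2 - r + ε)) ∧
      (2 * m < n + r → ((fareyMatrices m n r H).ncard : ℝ) ≤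
        C * H ^ ((2 * n * r + 2 * m : ℝ) - 2 * r + ε)) := by
  obtain ⟨C, hC⟩ := exists_ncard_fareyMatrices_le_rpow m n r hε
  -- The exponents in `hC` are affine in `k` with slope `2 * m - n - r`, so the largest one is at
  -- `k = r` in the first case and at `k = 1` in the second.
  refine ⟨C, fun H hH ↦ ⟨fun hmn ↦ hC H hH _ ?_ fun k hk ↦ ?_,
    fun hmn ↦ hC H hH _ ?_ fun k hk ↦ ?_⟩⟩
  · rintro rfl
    norm_num
  · have hkr : (k : ℝ) ≤ r := Nat.cast_le.2 (mem_Icc.1 hk).2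
    have hslope : (n : ℝ) + r ≤ 2 * m := by exact_mod_cast hmn
    linarith [mul_nonneg (sub_nonneg.2 hkr) (sub_nonneg.2 hslope)]
  · rintro rfl
    norm_num
  · have hk1 : (1 : ℝ) ≤ k := Nat.one_le_cast.2 (mem_Icc.1 hk).1
    have hslope : 2 * (m : ℝ) ≤ n + r := by exact_mod_cast hmn.le
    linarith [mul_nonneg (sub_nonneg.2 hk1) (sub_nonneg.2 hslope)]

theorem stmt0 (m n r : ℕ) (hnm : n ≥ m) (hmr : m > r) :
    ∀ ε > (0 : ℝ), ∃ C : ℝ, ∀ H : ℝ, H ≥ 2 →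
      (2 * m ≥ n + r →
        (Set.ncard {A : Matrix (Fin m) (Fin n) ℚ |
            (∀ i j, A i j ∈ Farey H) ∧ A.rank = r} : ℝ) ≤
          C * H ^ ((2 * m * r + n * r + n : ℝ) - r ^ 2 - r + ε)) ∧
      (2 * m < n + r →
        (Set.ncard {A : Matrix (Fin m) (Fin n) ℚ |
            (∀ i j, A i j ∈ Farey H) ∧ A.rank = r} : ℝ) ≤
          C * H ^ ((2 * n * r + 2 * m : ℝ) - 2 * r + ε)) := by
  intro ε hε
  obtain ⟨C, hC⟩ := stmt0_general m n r hε
  exact ⟨C, fun H hH ↦ hC H (one_le_two.trans hH)⟩
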